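/- Convolution of q-Hermite Gaussians: for r, l ≥ 0 and 0 < γ < 1, (h̃_r(X;q) e_{q²}(-X²)) *_γ (h̃_l(X;q) e_{q²}(-X²)) = c_q(γ) q^{lr} Σ_{k≥0} q^{3k²} q^{2(r+l)k}/(q²;q²)_k · h̃_{l+r+2k}(X;q) e_{q²}(-X²). In particular, since the right side is symmetric in r and l, polynomials times the q-Gaussian commute under q-convolution. -/

import Mathlib

open scoped BigOperators

noncomputable section

/-- finite q-Pochhammer symbol `(a;q)_k` -/
def qPoch (q a : ℝ) (k : ℕ) : ℝ := ∏ j ∈ Finset.range k, (1 - a * q ^ j)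

/-- infinite q-Pochhammer symbol `(a;q)_∞` -/
def qPochInf (q a : ℝ) : ℝ := ∏' j : ℕ, (1 - a * q ^ j)

/-- q-integral over the lattice `L(γ) = {± q^k γ}` -/
def qInt (q γ : ℝ) (f : ℝ → ℝ) : ℝ :=
  (1 - q) * ∑' k : ℤ, (q ^ k * γ) * (f (q ^ k * γ) + f (-(q ^ k * γ)))

/-- k-th q-moment -/
def qMoment (q γ : ℝ) (e : ℕ) (f : ℝ → ℝ) : ℝ :=
  q ^ (e * (e + 1) / 2) * qInt q γ (fun x => f x * x ^ e)

/-- k-th strict q-moment -/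
def qNu (q γ : ℝ) (e : ℕ) (f : ℝ → ℝ) : ℝ :=
  q ^ (e * (e + 1) / 2) * qInt q γ (fun x => |f x * x ^ e|)

/-- q-derivative -/
def qDeriv (q : ℝ) (f : ℝ → ℝ) : ℝ → ℝ := fun x => (f x - f (q * x)) / ((1 - q) * x)

/-- q-factorial `[e]_q!` -/
def qFact (q : ℝ) (e : ℕ) : ℝ := qPoch q q e / (1 - q) ^ e

/-- q-binomial coefficient -/
def qBinom (q : ℝ) (n k : ℕ) : ℝ := qPoch q q n / (qPoch q q k * qPoch q q (n - k))

/-- q-convolution -/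
def qConv (q γ : ℝ) (f g : ℝ → ℝ) : ℝ → ℝ :=
  fun x => ∑' e : ℕ, (-1) ^ e * qMoment q γ e f / qFact q e * (qDeriv q)^[e] g x

/-- the q-Gaussian `e_{q²}(-x²)` -/
def qGauss (q : ℝ) : ℝ → ℝ := fun x => 1 / qPochInf (q ^ 2) (-(x ^ 2))

/-- discrete q-Hermite II polynomials -/
def qHermiteII (q : ℝ) (k : ℕ) (x : ℝ) : ℝ :=
  qPoch q q k * ∑ l ∈ Finset.range (k / 2 + 1),
    (-1) ^ l * q ^ (2 * l ^ 2 + l) / q ^ (2 * l * k) * x ^ (k - 2 * l) /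
      (qPoch (q ^ 2) (q ^ 2) l * qPoch q q (k - 2 * l))

/-- discrete delta function on the lattice, supported at `η γ q^p` -/
def qdelta (q γ η : ℝ) (p : ℤ) : ℝ → ℝ := fun x => if x = η * γ * q ^ p then 1 else 0

open Polynomial Filter Topology

lemma qPoch_succ (q a : ℝ) (k : ℕ) : qPoch q a (k + 1) = qPoch q a k * (1 - a * q ^ k) := by
  simp [qPoch, Finset.prod_range_succ]

lemma qPoch_self_succ (q : ℝ) (k : ℕ) :
    qPoch q q (k + 1) = qPoch q q k * (1 - q ^ (k + 1)) := by
  rw [qPoch_succ, pow_succ' q k]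

lemma qPoch_self_pos {q : ℝ} (h0 : 0 < q) (h1 : q < 1) (k : ℕ) : 0 < qPoch q q k := by
  refine Finset.prod_pos fun j _ => ?_
  rw [← pow_succ']
  exact sub_pos.2 (pow_lt_one₀ h0.le h1 (Nat.succ_ne_zero j))

lemma pow_one_sub_le_qPoch {q : ℝ} (h0 : 0 < q) (h1 : q < 1) (k : ℕ) :
    (1 - q) ^ k ≤ qPoch q q k := by
  induction k with
  | zero => simp [qPoch]
  | succ k ih =>
    rw [qPoch_self_succ, pow_succ]
    have : q ^ (k + 1) ≤ q := pow_le_of_le_one h0.le h1.le (Nat.succ_ne_zero k)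
    exact mul_le_mul ih (by linarith) (by linarith) (qPoch_self_pos h0 h1 k).le

/-! ### The q-Gaussian -/

lemma qGauss_neg (q x : ℝ) : qGauss q (-x) = qGauss q x := by simp [qGauss]

lemma qGauss_mul {q : ℝ} (h0 : 0 < q) (h1 : q < 1) (x : ℝ) :
    qGauss q (q * x) = (1 + x ^ 2) * qGauss q x := by
  have hs : Summable fun j : ℕ => (q * x) ^ 2 * (q ^ 2) ^ j :=
    (summable_geometric_of_lt_one (by positivity) (pow_lt_one₀ h0.le h1 two_ne_zero)).mul_left _
  have hm : Multipliable fun j : ℕ => 1 + (q * x) ^ 2 * (q ^ 2) ^ j :=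
    Real.multipliable_one_add_of_summable hs
  have key : qPochInf (q ^ 2) (-(x ^ 2)) =
      (1 + x ^ 2) * qPochInf (q ^ 2) (-((q * x) ^ 2)) := by
    unfold qPochInf
    rw [tprod_eq_zero_mul']
    · congr 1
      · simp
      · refine tprod_congr fun j => ?_
        ring
    · refine hm.congr fun j => ?_
      ring
  have hx : 1 + x ^ 2 ≠ 0 := by positivity
  simp only [qGauss]
  rw [key]
  field_simp

/-! ### Sums over the lattice -/

lemma summable_lattice_pow {q γ : ℝ} (h0 : 0 < q) (h1 : q < 1) (hγ : γ ≠ 0) (n : ℕ) :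
    Summable fun k : ℤ => (q ^ k * γ) ^ (n + 1) * qGauss q (q ^ k * γ) := by
  have hstep (x : ℝ) : ‖(q * x) ^ (n + 1) * qGauss q (q * x)‖ =
      q ^ (n + 1) * (1 + x ^ 2) * ‖x ^ (n + 1) * qGauss q x‖ := by
    rw [qGauss_mul h0 h1, mul_pow, mul_mul_mul_comm, norm_mul,
      Real.norm_of_nonneg (by positivity)]
  refine Summable.of_nat_of_neg ?_ ?_
  · have hlt : q ^ (n + 1) < 1 := pow_lt_one₀ h0.le h1 (Nat.succ_ne_zero n)
    obtain ⟨ρ, hρ, hρ1⟩ := exists_between hlt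
    have hlim : Tendsto (fun k : ℕ => q ^ (n + 1) * (1 + (q ^ k * γ) ^ 2)) atTop
        (𝓝 (q ^ (n + 1) * (1 + (0 * γ) ^ 2))) :=
      ((((tendsto_pow_atTop_nhds_zero_of_lt_one h0.le h1).mul_const γ).pow 2).const_add
        1).const_mul _
    refine summable_of_ratio_norm_eventually_le hρ1 ?_
    filter_upwards [hlim.eventually_le_const (u := ρ) (by simpa using hρ)] with k hk
    have := hstep (q ^ k * γ)
    rw [← mul_assoc, ← pow_succ'] at this
    simp only [zpow_natCast]
    rw [this]
    gcongr
  · have hlim : Tendsto (fun k : ℕ => q ^ (n + 1) * (1 + ((q⁻¹) ^ (k + 1) * γ) ^ 2)) atTop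
        atTop := by
      have h2 : Tendsto (fun k : ℕ => ((q⁻¹ ^ 2) ^ (k + 1)) * γ ^ 2) atTop atTop :=
        ((tendsto_pow_atTop_atTop_of_one_lt
          (one_lt_pow₀ ((one_lt_inv₀ h0).2 h1) two_ne_zero)).comp
            (tendsto_add_atTop_nat 1)).atTop_mul_const (by positivity)
      have h3 := (tendsto_atTop_add_const_left _ 1 h2).const_mul_atTop
        (show 0 < q ^ (n + 1) by positivity)
      refine h3.congr fun k => ?_
      ring
    refine summable_of_ratio_norm_eventually_le (r := 1 / 2) (by norm_num) ?_
    filter_upwards [hlim.eventually_ge_atTop 2] with k hk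
    have hz (j : ℕ) : q ^ (-(j : ℤ)) = q⁻¹ ^ j := by simp
    rw [hz, hz]
    have := hstep (q⁻¹ ^ (k + 1) * γ)
    have e : q * (q⁻¹ ^ (k + 1) * γ) = q⁻¹ ^ k * γ := by
      rw [pow_succ']; field_simp
    rw [e] at this
    rw [this]
    nlinarith [norm_nonneg ((q⁻¹ ^ (k + 1) * γ) ^ (n + 1) * qGauss q (q⁻¹ ^ (k + 1) * γ))]

lemma summable_lattice_eval {q γ : ℝ} (h0 : 0 < q) (h1 : q < 1) (hγ : γ ≠ 0) (p : ℝ[X]) :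
    Summable fun k : ℤ => q ^ k * γ * (p.eval (q ^ k * γ) * qGauss q (q ^ k * γ)) := by
  induction p using Polynomial.induction_on' with
  | add p₁ p₂ h₁ h₂ =>
    refine (h₁.add h₂).congr fun k => ?_
    rw [eval_add]; ring
  | monomial n a =>
    refine ((summable_lattice_pow h0 h1 hγ n).mul_left a).congr fun k => ?_
    rw [eval_monomial]; ring

lemma summable_lattice_symm {q γ : ℝ} (h0 : 0 < q) (h1 : q < 1) (hγ : γ ≠ 0) (p : ℝ[X]) :
    Summable fun k : ℤ => q ^ k * γ * (p.eval (q ^ k * γ) * qGauss q (q ^ k * γ) +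
      p.eval (-(q ^ k * γ)) * qGauss q (-(q ^ k * γ))) := by
  refine (summable_lattice_eval h0 h1 hγ (p + p.comp (-X))).congr fun k => ?_
  simp only [eval_add, eval_comp, eval_neg, eval_X, qGauss_neg]
  ring

/-- The q-integral of a polynomial against the q-Gaussian, as a linear functional. -/
def gaussFunctional {q γ : ℝ} (h0 : 0 < q) (h1 : q < 1) (hγ : γ ≠ 0) : ℝ[X] →ₗ[ℝ] ℝ where
  toFun p := qInt q γ fun x => p.eval x * qGauss q x
  map_add' p₁ p₂ := by
    unfold qInt
    rw [← mul_add, ← (summable_lattice_symm h0 h1 hγ p₁).tsum_add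
      (summable_lattice_symm h0 h1 hγ p₂)]
    congr 1
    refine tsum_congr fun k => ?_
    simp only [eval_add]; ring
  map_smul' a p := by
    simp only [qInt, eval_smul, smul_eq_mul, RingHom.id_apply]
    rw [mul_left_comm a, ← tsum_mul_left (a := a)]
    congr 1
    refine tsum_congr fun k => ?_
    ring

lemma gaussFunctional_apply {q γ : ℝ} (h0 : 0 < q) (h1 : q < 1) (hγ : γ ≠ 0) (p : ℝ[X]) :
    gaussFunctional h0 h1 hγ p = qInt q γ fun x => p.eval x * qGauss q x := rfl

/-! ### The discrete q-Hermite II polynomials -/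

/-- The discrete q-Hermite II polynomials, defined by their three-term recurrence. -/
def qHermitePoly (q : ℝ) : ℕ → ℝ[X]
  | 0 => 1
  | 1 => X
  | n + 2 => X * qHermitePoly q (n + 1) -
      C ((1 - q ^ (n + 1)) / q ^ (2 * n + 1)) * qHermitePoly q n

lemma qHermitePoly_add_two (q : ℝ) (n : ℕ) :
    qHermitePoly q (n + 2) = X * qHermitePoly q (n + 1) -
      C ((1 - q ^ (n + 1)) / q ^ (2 * n + 1)) * qHermitePoly q n := by
  rw [qHermitePoly]

/-- The coefficient of `x ^ (n - 2 * l)` in the discrete q-Hermite II polynomial of degree `n`. -/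
def qHermiteCoeff (q : ℝ) (n l : ℕ) : ℝ :=
  if 2 * l ≤ n then
    qPoch q q n * ((-1) ^ l * q ^ (2 * l ^ 2 + l) / q ^ (2 * l * n)) /
      (qPoch (q ^ 2) (q ^ 2) l * qPoch q q (n - 2 * l))
  else 0

lemma qHermiteCoeff_zero_right {q : ℝ} (h0 : 0 < q) (h1 : q < 1) (n : ℕ) :
    qHermiteCoeff q n 0 = 1 := by
  have := (qPoch_self_pos h0 h1 n).ne'
  have hQ : qPoch (q ^ 2) (q ^ 2) 0 = 1 := by simp [qPoch]
  simp [qHermiteCoeff, this, hQ]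

lemma qHermiteII_eq_sum (q : ℝ) (n N : ℕ) (hN : n / 2 + 1 ≤ N) (x : ℝ) :
    qHermiteII q n x = ∑ l ∈ Finset.range N, qHermiteCoeff q n l * x ^ (n - 2 * l) := by
  rw [qHermiteII, Finset.mul_sum]
  refine Finset.sum_congr_of_eq_on_inter ?_ ?_ ?_
  · intro l hl hl'
    simp only [Finset.mem_range] at hl hl'
    omega
  · intro l _ hl'
    simp only [Finset.mem_range] at hl'
    rw [qHermiteCoeff, if_neg (by omega), zero_mul]
  · intro l hl _
    simp only [Finset.mem_range] at hl
    rw [qHermiteCoeff, if_pos (by omega)]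
    ring

lemma qHermiteCoeff_add_two {q : ℝ} (h0 : 0 < q) (h1 : q < 1) (n l : ℕ) (hl : 2 * l ≤ n) :
    qHermiteCoeff q (n + 2) (l + 1) = qHermiteCoeff q (n + 1) (l + 1) -
      (1 - q ^ (n + 1)) / q ^ (2 * n + 1) * qHermiteCoeff q n l := by
  have hP (k : ℕ) : qPoch q q k ≠ 0 := (qPoch_self_pos h0 h1 k).ne'
  have hQ (k : ℕ) : qPoch (q ^ 2) (q ^ 2) k ≠ 0 :=
    (qPoch_self_pos (by positivity) (pow_lt_one₀ h0.le h1 two_ne_zero) k).ne'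
  have hne (k : ℕ) : 1 - q ^ (k + 1) ≠ 0 :=
    (sub_pos.2 (pow_lt_one₀ h0.le h1 (Nat.succ_ne_zero k))).ne'
  have hQs : qPoch (q ^ 2) (q ^ 2) (l + 1) =
      qPoch (q ^ 2) (q ^ 2) l * (1 - q ^ (2 * l + 1 + 1)) := by
    rw [qPoch_self_succ, ← pow_mul]; ring_nf
  rcases hl.eq_or_lt with rfl | hlt
  · rw [qHermiteCoeff, if_pos (by omega), qHermiteCoeff, if_neg (by omega), qHermiteCoeff,
      if_pos le_rfl, show 2 * l + 2 - 2 * (l + 1) = 0 by omega, Nat.sub_self, hQs,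
      qPoch_self_succ q (2 * l + 1), qPoch_self_succ q (2 * l)]
    have a1 := hP (2 * l)
    have a2 := hQ l
    have a3 := hne (2 * l + 1)
    have a4 := hP 0
    field_simp
    ring
  · obtain ⟨m, rfl⟩ := Nat.exists_eq_add_of_lt hlt
    rw [qHermiteCoeff, if_pos (by omega), qHermiteCoeff, if_pos (by omega), qHermiteCoeff,
      if_pos (by omega), show 2 * l + m + 1 + 2 - 2 * (l + 1) = m + 1 by omega,
      show 2 * l + m + 1 + 1 - 2 * (l + 1) = m by omega,
      show 2 * l + m + 1 - 2 * l = m + 1 by omega, hQs,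
      qPoch_self_succ q (2 * l + m + 1 + 1), qPoch_self_succ q (2 * l + m + 1),
      qPoch_self_succ q m]
    have a1 := hP (2 * l + m + 1)
    have a2 := hQ l
    have a3 := hne (2 * l + 1)
    have a4 := hP m
    have a5 := hne m
    field_simp
    ring

lemma qHermiteII_add_two {q : ℝ} (h0 : 0 < q) (h1 : q < 1) (n : ℕ) (x : ℝ) :
    qHermiteII q (n + 2) x = x * qHermiteII q (n + 1) x -
      (1 - q ^ (n + 1)) / q ^ (2 * n + 1) * qHermiteII q n x := by
  rw [qHermiteII_eq_sum q (n + 2) (n / 2 + 1 + 1) (by omega),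
    qHermiteII_eq_sum q (n + 1) (n / 2 + 1 + 1) (by omega),
    qHermiteII_eq_sum q n (n / 2 + 1) le_rfl, Finset.sum_range_succ' _ (n / 2 + 1),
    Finset.sum_range_succ' _ (n / 2 + 1),
    qHermiteCoeff_zero_right h0 h1, qHermiteCoeff_zero_right h0 h1, mul_add, Finset.mul_sum,
    Finset.mul_sum, add_sub_right_comm, ← Finset.sum_sub_distrib]
  congr 1
  · refine Finset.sum_congr rfl fun l hl => ?_
    have hl' : 2 * l ≤ n := by
      have := Finset.mem_range.1 hl
      omega
    rw [qHermiteCoeff_add_two h0 h1 n l hl', show n + 2 - 2 * (l + 1) = n - 2 * l by omega]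
    rcases hl'.eq_or_lt with rfl | hlt
    · rw [qHermiteCoeff.eq_1 q (2 * l + 1), if_neg (by omega)]
      ring
    · rw [show n - 2 * l = (n + 1 - 2 * (l + 1)) + 1 by omega]
      ring
  · simp only [mul_zero, Nat.sub_zero]
    ring

lemma eval_qHermitePoly {q : ℝ} (h0 : 0 < q) (h1 : q < 1) (n : ℕ) (x : ℝ) :
    (qHermitePoly q n).eval x = qHermiteII q n x := by
  induction n using Nat.twoStepInduction with
  | zero => simp [qHermitePoly, qHermiteII, qPoch]
  | one =>
    have : 1 - q ≠ 0 := by linarith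
    simp [qHermitePoly, qHermiteII, qPoch]
    field_simp
  | more n ih₁ ih₂ =>
    rw [qHermitePoly_add_two, qHermiteII_add_two h0 h1, ← ih₁, ← ih₂]
    simp

lemma eval_qHermitePoly_mul {q : ℝ} (h0 : 0 < q) (n : ℕ) (x : ℝ) :
    (1 + x ^ 2) * (qHermitePoly q n).eval (q * x) =
      (qHermitePoly q n).eval x + q ^ n * x * (qHermitePoly q (n + 1)).eval x := by
  induction n using Nat.twoStepInduction with
  | zero => simp [qHermitePoly]; ring
  | one =>
    simp [qHermitePoly]
    field_simp
    ring
  | more n ih₁ ih₂ =>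
    rw [qHermitePoly_add_two q (n + 1), qHermitePoly_add_two q n]
    rw [qHermitePoly_add_two q n] at ih₂
    simp only [eval_sub, eval_mul, eval_X, eval_C] at ih₂ ⊢
    rw [mul_sub, mul_left_comm, ih₂, mul_left_comm, ih₁]
    field_simp
    ring

lemma span_qHermitePoly (q : ℝ) : Submodule.span ℝ (Set.range (qHermitePoly q)) = ⊤ := by
  set S := Submodule.span ℝ (Set.range (qHermitePoly q)) with hS
  have hmem (n : ℕ) : qHermitePoly q n ∈ S := Submodule.subset_span ⟨n, rfl⟩
  have hX (p : ℝ[X]) (hp : p ∈ S) : X * p ∈ S := by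
    induction hp using Submodule.span_induction with
    | mem p hp =>
      obtain ⟨n, rfl⟩ := hp
      cases n with
      | zero => simpa [qHermitePoly] using hmem 1
      | succ n =>
        have := S.add_mem (hmem (n + 2))
          (S.smul_mem ((1 - q ^ (n + 1)) / q ^ (2 * n + 1)) (hmem n))
        rwa [qHermitePoly_add_two, smul_eq_C_mul, sub_add_cancel] at this
    | zero => simp
    | add p₁ p₂ _ _ h₁ h₂ => rw [mul_add]; exact S.add_mem h₁ h₂
    | smul a p _ h => rw [mul_smul_comm]; exact S.smul_mem a h
  have hpow (n : ℕ) : (X : ℝ[X]) ^ n ∈ S := by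
    induction n with
    | zero => simpa [qHermitePoly] using hmem 0
    | succ n ih => rw [pow_succ']; exact hX _ ih
  refine eq_top_iff.2 fun p _ => ?_
  induction p using Polynomial.induction_on' with
  | add p₁ p₂ h₁ h₂ => exact S.add_mem (h₁ trivial) (h₂ trivial)
  | monomial n a =>
    rw [← C_mul_X_pow_eq_monomial, ← smul_eq_C_mul]
    exact S.smul_mem a (hpow n)

/-- Growth of the discrete q-Hermite II polynomials at a fixed point, with `q = s ^ 2`. -/
lemma abs_eval_qHermitePoly_le {s : ℝ} (h0 : 0 < s) (h1 : s < 1) (n : ℕ) (x : ℝ) :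
    |(qHermitePoly (s ^ 2) n).eval x| ≤ (|x| + 1) ^ n / s ^ (n ^ 2) := by
  induction n using Nat.twoStepInduction with
  | zero => simp [qHermitePoly]
  | one =>
    rw [le_div_iff₀ (by positivity)]
    simp only [qHermitePoly, eval_X, one_pow, pow_one]
    nlinarith [abs_nonneg x]
  | more n ih₁ ih₂ =>
    rw [qHermitePoly_add_two]
    simp only [eval_sub, eval_mul, eval_X, eval_C]
    have hA : 0 ≤ |x| := abs_nonneg x
    have hq : 0 ≤ 1 - (s ^ 2) ^ (n + 1) := sub_nonneg.2 (pow_le_one₀ (by positivity)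
      (pow_le_one₀ h0.le h1.le))
    have hc : |(1 - (s ^ 2) ^ (n + 1)) / (s ^ 2) ^ (2 * n + 1)| ≤ 1 / (s ^ 2) ^ (2 * n + 1) := by
      rw [abs_of_nonneg (by positivity)]
      gcongr
      exact sub_le_self _ (by positivity)
    calc _ ≤ |x * (qHermitePoly (s ^ 2) (n + 1)).eval x| +
          |(1 - (s ^ 2) ^ (n + 1)) / (s ^ 2) ^ (2 * n + 1) * (qHermitePoly (s ^ 2) n).eval x| :=
          abs_sub _ _
      _ ≤ |x| * ((|x| + 1) ^ (n + 1) / s ^ ((n + 1) ^ 2)) +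
          1 / (s ^ 2) ^ (2 * n + 1) * ((|x| + 1) ^ n / s ^ (n ^ 2)) := by
        rw [abs_mul, abs_mul]
        gcongr
      _ = (|x| * (|x| + 1) * s ^ (2 * n + 3) + s ^ 2) * (|x| + 1) ^ n / s ^ ((n + 2) ^ 2) := by
        field_simp
        ring
      _ ≤ (|x| * (|x| + 1) * 1 + 1) * (|x| + 1) ^ n / s ^ ((n + 2) ^ 2) := by
        gcongr
        · exact pow_le_one₀ h0.le h1.le
        · exact pow_le_one₀ h0.le h1.le
      _ ≤ (|x| + 1) ^ (n + 2) / s ^ ((n + 2) ^ 2) := by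
        rw [pow_add _ n 2, mul_comm ((|x| + 1) ^ n)]
        gcongr
        nlinarith

lemma summable_pow_mul_pow_sq {q : ℝ} (h0 : 0 < q) (h1 : q < 1) (B : ℝ) :
    Summable fun k : ℕ => B ^ k * q ^ (k ^ 2) := by
  have hlim : Tendsto (fun k : ℕ => ‖B‖ * q * (q ^ 2) ^ k) atTop (𝓝 (‖B‖ * q * 0)) :=
    (tendsto_pow_atTop_nhds_zero_of_lt_one (by positivity)
      (pow_lt_one₀ h0.le h1 two_ne_zero)).const_mul _
  refine summable_of_ratio_norm_eventually_le (r := 1 / 2) (by norm_num) ?_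
  filter_upwards [hlim.eventually_le_const (u := 1 / 2) (by norm_num)] with k hk
  have : B ^ (k + 1) * q ^ ((k + 1) ^ 2) = B * q * (q ^ 2) ^ k * (B ^ k * q ^ (k ^ 2)) := by ring
  rw [this, norm_mul]
  gcongr
  rwa [norm_mul, norm_mul, Real.norm_of_nonneg h0.le,
    Real.norm_of_nonneg (show 0 ≤ (q ^ 2) ^ k by positivity)]

lemma summable_qHermite_series {q : ℝ} (h0 : 0 < q) (h1 : q < 1) (N : ℕ) (x : ℝ) :
    Summable fun k : ℕ => q ^ (3 * k ^ 2) * q ^ (2 * N * k) / qPoch (q ^ 2) (q ^ 2) k *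
      (qHermitePoly q (N + 2 * k)).eval x := by
  obtain ⟨s, hs0, rfl⟩ : ∃ s : ℝ, 0 < s ∧ q = s ^ 2 :=
    ⟨√q, Real.sqrt_pos.2 h0, (Real.sq_sqrt h0.le).symm⟩
  have hs1 : s < 1 := by nlinarith
  have hQ1 : (s ^ 2) ^ 2 < 1 := pow_lt_one₀ h0.le h1 two_ne_zero
  have hd : 0 < 1 - (s ^ 2) ^ 2 := sub_pos.2 hQ1
  refine Summable.of_norm_bounded (((summable_pow_mul_pow_sq h0 h1
    ((|x| + 1) ^ 2 / (1 - (s ^ 2) ^ 2))).mul_left ((|x| + 1) ^ N / s ^ (N ^ 2)))) fun k => ?_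
  have hP := qPoch_self_pos (q := (s ^ 2) ^ 2) (by positivity) hQ1 k
  rw [norm_mul, Real.norm_of_nonneg (by positivity), Real.norm_eq_abs]
  calc _ ≤ (s ^ 2) ^ (3 * k ^ 2) * (s ^ 2) ^ (2 * N * k) / (1 - (s ^ 2) ^ 2) ^ k *
        ((|x| + 1) ^ (N + 2 * k) / s ^ ((N + 2 * k) ^ 2)) := by
        gcongr
        · exact pow_one_sub_le_qPoch (by positivity) hQ1 k
        · exact abs_eval_qHermitePoly_le hs0 hs1 _ x
    _ = _ := by
        rw [div_pow, ← pow_mul (|x| + 1)]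
        field_simp
        ring

/-! ### Moments of the q-Hermite Gaussians -/

lemma gaussFunctional_qHermitePoly_succ {q γ : ℝ} (h0 : 0 < q) (h1 : q < 1) (hγ : γ ≠ 0)
    (n : ℕ) : gaussFunctional h0 h1 hγ (qHermitePoly q (n + 1)) = 0 := by
  obtain ⟨p, hp⟩ : X ∣ qHermitePoly q n - (qHermitePoly q n).comp (-X) := by
    rw [X_dvd_iff, coeff_zero_eq_eval_zero]
    simp
  set u : ℤ → ℝ := fun k => q ^ k * γ * (p.eval (q ^ k * γ) * qGauss q (q ^ k * γ)) with hu
  have hsum : Summable u := summable_lattice_eval h0 h1 hγ p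
  have hsum' : Summable fun k => u (k + 1) := (Equiv.addRight (1 : ℤ)).summable_iff.2 hsum
  have hux (k : ℤ) : u k = ((qHermitePoly q n).eval (q ^ k * γ) -
      (qHermitePoly q n).eval (-(q ^ k * γ))) * qGauss q (q ^ k * γ) := by
    have := congrArg (eval (q ^ k * γ)) hp
    simp only [eval_sub, eval_comp, eval_neg, eval_X, eval_mul] at this
    rw [this, hu]
    ring
  have hterm (k : ℤ) : q ^ k * γ * ((qHermitePoly q (n + 1)).eval (q ^ k * γ) *
      qGauss q (q ^ k * γ) + (qHermitePoly q (n + 1)).eval (-(q ^ k * γ)) *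
        qGauss q (-(q ^ k * γ))) = (q ^ n)⁻¹ * (u (k + 1) - u k) := by
    rw [hux, hux, zpow_add_one₀ h0.ne', qGauss_neg, mul_comm (q ^ k) q, mul_assoc q]
    set y := q ^ k * γ
    have e1 := eval_qHermitePoly_mul h0 n y
    have e2 := eval_qHermitePoly_mul h0 n (-y)
    rw [mul_neg, neg_sq] at e2
    rw [qGauss_mul h0 h1, eq_inv_mul_iff_mul_eq₀ (by positivity)]
    linear_combination qGauss q y * (e2 - e1)
  rw [gaussFunctional_apply, qInt, tsum_congr hterm, tsum_mul_left,
    Summable.tsum_sub hsum' hsum,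
    show ∑' k : ℤ, u (k + 1) = ∑' k, u k from (Equiv.addRight (1 : ℤ)).tsum_eq u]
  simp

lemma gaussFunctional_X_pow_succ_mul {q γ : ℝ} (h0 : 0 < q) (h1 : q < 1) (hγ : γ ≠ 0)
    (p r : ℕ) : gaussFunctional h0 h1 hγ (X ^ (p + 1) * qHermitePoly q (r + 1)) =
      gaussFunctional h0 h1 hγ (X ^ p * qHermitePoly q (r + 2)) +
      (1 - q ^ (r + 1)) / q ^ (2 * r + 1) *
        gaussFunctional h0 h1 hγ (X ^ p * qHermitePoly q r) := by
  rw [← smul_eq_mul (_ / _), ← map_smul, ← map_add, qHermitePoly_add_two, smul_eq_C_mul]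
  congr 1
  ring

lemma gaussFunctional_X_pow_mul {q γ : ℝ} (h0 : 0 < q) (h1 : q < 1) (hγ : γ ≠ 0) (p : ℕ) :
    ∀ r : ℕ, (∀ k, p = r + 2 * k → gaussFunctional h0 h1 hγ (X ^ p * qHermitePoly q r) =
        qInt q γ (qGauss q) * qPoch q q (r + 2 * k) /
          (q ^ (2 * r * k + k ^ 2 + r ^ 2) * qPoch (q ^ 2) (q ^ 2) k)) ∧
      ((∀ k, p ≠ r + 2 * k) →
        gaussFunctional h0 h1 hγ (X ^ p * qHermitePoly q r) = 0) := by
  have hQ (k : ℕ) : qPoch (q ^ 2) (q ^ 2) k ≠ 0 :=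
    (qPoch_self_pos (by positivity) (pow_lt_one₀ h0.le h1 two_ne_zero) k).ne'
  have hne (k : ℕ) : 1 - q ^ (k + 1) ≠ 0 :=
    (sub_pos.2 (pow_lt_one₀ h0.le h1 (Nat.succ_ne_zero k))).ne'
  have hQs (k : ℕ) : qPoch (q ^ 2) (q ^ 2) (k + 1) =
      qPoch (q ^ 2) (q ^ 2) k * (1 - q ^ (2 * k + 1 + 1)) := by
    rw [qPoch_self_succ, ← pow_mul]; ring_nf
  induction p with
  | zero =>
    intro r
    cases r with
    | zero =>
      refine ⟨fun k hk => ?_, fun h => absurd rfl (h 0)⟩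
      obtain rfl : k = 0 := by omega
      simp [gaussFunctional_apply, qHermitePoly, qPoch]
    | succ r =>
      refine ⟨fun k hk => by omega, fun _ => ?_⟩
      rw [pow_zero, one_mul, gaussFunctional_qHermitePoly_succ]
  | succ p ih =>
    intro r
    cases r with
    | zero =>
      have e : X ^ (p + 1) * qHermitePoly q 0 = X ^ p * qHermitePoly q 1 := by
        simp [qHermitePoly, pow_succ]
      rw [e]
      refine ⟨fun k hk => ?_, fun h => (ih 1).2 fun k hk => h (k + 1) (by omega)⟩
      obtain ⟨k, rfl⟩ : ∃ j, k = j + 1 := ⟨k - 1, by omega⟩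
      rw [(ih 1).1 k (by omega), hQs, show 0 + 2 * (k + 1) = 1 + 2 * k + 1 by ring,
        qPoch_self_succ q (1 + 2 * k), show 1 + 2 * k + 1 = 2 * k + 1 + 1 by ring]
      have a1 := hQ k
      have a2 := hne (2 * k + 1)
      field_simp
      ring
    | succ r =>
      rw [gaussFunctional_X_pow_succ_mul]
      refine ⟨fun k hk => ?_, fun h => ?_⟩
      · rw [(ih r).1 k (by omega), show r + 1 + 2 * k = r + 2 * k + 1 by ring,
          qPoch_self_succ q (r + 2 * k)]
        cases k with
        | zero =>
          rw [(ih (r + 2)).2 fun j => by omega]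
          have a1 := hQ 0
          field_simp
          ring
        | succ k =>
          rw [(ih (r + 2)).1 k (by omega), hQs, show r + 2 + 2 * k = r + 2 * (k + 1) by ring]
          have a1 := hQ k
          have a2 := hne (2 * k + 1)
          field_simp
          ring
      · rw [(ih r).2 fun k hk => h k (by omega),
          (ih (r + 2)).2 fun k hk => h (k + 1) (by omega)]
        simp

/-! ### The q-convolution -/

lemma qDeriv_iterate_qHermitePoly {q : ℝ} (h0 : 0 < q) (h1 : q < 1) (l e : ℕ) (x : ℝ)
    (hx : x ≠ 0) :
    (qDeriv q)^[e] (fun y => (qHermitePoly q l).eval y * qGauss q y) x =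
      (-1) ^ e * q ^ (l * e + e.choose 2) / (1 - q) ^ e *
        ((qHermitePoly q (l + e)).eval x * qGauss q x) := by
  have hq : 1 - q ≠ 0 := by linarith
  induction e generalizing x with
  | zero => simp
  | succ e ih =>
    rw [Function.iterate_succ_apply', qDeriv, ih x hx, ih (q * x) (by positivity),
      qGauss_mul h0 h1, Nat.choose_succ_succ' e 1, Nat.choose_one_right]
    have key := eval_qHermitePoly_mul h0 (l + e) x
    rw [div_eq_iff (by positivity), ← mul_sub]
    have : (qHermitePoly q (l + e)).eval x * qGauss q x -
        (qHermitePoly q (l + e)).eval (q * x) * ((1 + x ^ 2) * qGauss q x) =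
        -(q ^ (l + e) * x * (qHermitePoly q (l + (e + 1))).eval x * qGauss q x) := by
      rw [← add_assoc]
      linear_combination -qGauss q x * key
    rw [this]
    field_simp
    ring

/-- The `e`-th term of the q-convolution of two polynomials times the q-Gaussian. -/
def qConvTerm (q γ : ℝ) (p₁ p₂ : ℝ[X]) (x : ℝ) (e : ℕ) : ℝ :=
  (-1) ^ e * qMoment q γ e (fun y => p₁.eval y * qGauss q y) / qFact q e *
    (qDeriv q)^[e] (fun y => p₂.eval y * qGauss q y) x

lemma qMoment_eval {q γ : ℝ} (h0 : 0 < q) (h1 : q < 1) (hγ : γ ≠ 0) (e : ℕ) (p : ℝ[X]) :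
    qMoment q γ e (fun y => p.eval y * qGauss q y) =
      q ^ (e + 1).choose 2 * gaussFunctional h0 h1 hγ (X ^ e * p) := by
  rw [qMoment, gaussFunctional_apply, Nat.choose_two_right, Nat.add_sub_cancel,
    mul_comm (e + 1) e]
  congr 2
  ext y
  simp only [eval_mul, eval_pow, eval_X]
  ring

lemma qConvTerm_add_left {q γ : ℝ} (h0 : 0 < q) (h1 : q < 1) (hγ : γ ≠ 0)
    (p p' p₂ : ℝ[X]) (x : ℝ) : qConvTerm q γ (p + p') p₂ x =
      fun e => qConvTerm q γ p p₂ x e + qConvTerm q γ p' p₂ x e := by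
  ext e
  simp only [qConvTerm, qMoment_eval h0 h1 hγ, mul_add, map_add]
  ring

lemma qConvTerm_smul_left {q γ : ℝ} (h0 : 0 < q) (h1 : q < 1) (hγ : γ ≠ 0)
    (a : ℝ) (p p₂ : ℝ[X]) (x : ℝ) : qConvTerm q γ (a • p) p₂ x =
      fun e => a * qConvTerm q γ p p₂ x e := by
  ext e
  simp only [qConvTerm, qMoment_eval h0 h1 hγ, mul_smul_comm, map_smul, smul_eq_mul]
  ring

lemma qDeriv_iterate_add (q : ℝ) (e : ℕ) (f g : ℝ → ℝ) :
    (qDeriv q)^[e] (fun y => f y + g y) =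
      fun y => (qDeriv q)^[e] f y + (qDeriv q)^[e] g y := by
  induction e with
  | zero => rfl
  | succ e ih =>
    rw [Function.iterate_succ_apply', ih, Function.iterate_succ_apply',
      Function.iterate_succ_apply']
    ext y
    simp only [qDeriv]
    ring

lemma qDeriv_iterate_const_mul (q : ℝ) (e : ℕ) (a : ℝ) (f : ℝ → ℝ) :
    (qDeriv q)^[e] (fun y => a * f y) = fun y => a * (qDeriv q)^[e] f y := by
  induction e with
  | zero => rfl
  | succ e ih =>
    rw [Function.iterate_succ_apply', ih, Function.iterate_succ_apply']
    ext y
    simp only [qDeriv]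
    ring

lemma qConvTerm_add_right (q γ : ℝ) (p₁ p p' : ℝ[X]) (x : ℝ) :
    qConvTerm q γ p₁ (p + p') x =
      fun e => qConvTerm q γ p₁ p x e + qConvTerm q γ p₁ p' x e := by
  ext e
  simp only [qConvTerm, eval_add, add_mul, qDeriv_iterate_add]
  ring

lemma qConvTerm_smul_right (q γ : ℝ) (a : ℝ) (p₁ p : ℝ[X]) (x : ℝ) :
    qConvTerm q γ p₁ (a • p) x = fun e => a * qConvTerm q γ p₁ p x e := by
  ext e
  simp only [qConvTerm, eval_smul, smul_eq_mul, mul_assoc a, qDeriv_iterate_const_mul]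
  ring

lemma qConvTerm_qHermitePoly {q γ : ℝ} (h0 : 0 < q) (h1 : q < 1) (hγ : γ ≠ 0) (r l : ℕ)
    (x : ℝ) (hx : x ≠ 0) (e : ℕ) :
    qConvTerm q γ (qHermitePoly q r) (qHermitePoly q l) x e =
      q ^ (e ^ 2 + l * e) * gaussFunctional h0 h1 hγ (X ^ e * qHermitePoly q r) /
        qPoch q q e * ((qHermitePoly q (l + e)).eval x * qGauss q x) := by
  have hc : e.choose 2 + (e + 1).choose 2 = e ^ 2 := by
    induction e with
    | zero => rfl
    | succ e ih =>
      have h1 := Nat.choose_succ_succ' e 1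
      have h2 := Nat.choose_succ_succ' (e + 1) 1
      simp only [Nat.choose_one_right] at h1 h2
      nlinarith
  have hq : 1 - q ≠ 0 := by linarith
  have hP := (qPoch_self_pos h0 h1 e).ne'
  have hs : ((-1 : ℝ) ^ e) * (-1) ^ e = 1 := by rw [← mul_pow]; simp
  rw [qConvTerm, qMoment_eval h0 h1 hγ, qDeriv_iterate_qHermitePoly h0 h1 l e x hx, qFact, ← hc,
    show e.choose 2 + (e + 1).choose 2 + l * e = (e + 1).choose 2 + (l * e + e.choose 2) by ring,
    pow_add q ((e + 1).choose 2)]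
  field_simp
  linear_combination (gaussFunctional h0 h1 hγ (X ^ e * qHermitePoly q r) *
    (qHermitePoly q (l + e)).eval x * qGauss q x) * hs

lemma hasSum_qConvTerm_qHermitePoly {q γ : ℝ} (h0 : 0 < q) (h1 : q < 1) (hγ : γ ≠ 0)
    (r l : ℕ) (x : ℝ) (hx : x ≠ 0) :
    HasSum (qConvTerm q γ (qHermitePoly q r) (qHermitePoly q l) x)
      (qInt q γ (qGauss q) * q ^ (l * r) *
        ∑' k : ℕ, q ^ (3 * k ^ 2) * q ^ (2 * (r + l) * k) / qPoch (q ^ 2) (q ^ 2) k *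
          ((qHermitePoly q (l + r + 2 * k)).eval x * qGauss q x)) := by
  have hinj : Function.Injective fun k : ℕ => r + 2 * k := fun a b h => by
    simp only at h
    omega
  have hQ (k : ℕ) : qPoch (q ^ 2) (q ^ 2) k ≠ 0 :=
    (qPoch_self_pos (by positivity) (pow_lt_one₀ h0.le h1 two_ne_zero) k).ne'
  have hs := ((summable_qHermite_series h0 h1 (l + r) x).mul_right (qGauss q x)).hasSum.mul_left
    (qInt q γ (qGauss q) * q ^ (l * r))
  simp only [mul_assoc _ (eval x _) (qGauss q x), add_comm l r] at hs
  rw [add_comm l r, ← hinj.hasSum_iff]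
  · refine hs.congr_fun fun k => ?_
    have hP := (qPoch_self_pos h0 h1 (r + 2 * k)).ne'
    have hQk := hQ k
    rw [Function.comp_apply, qConvTerm_qHermitePoly h0 h1 hγ r l x hx,
      (gaussFunctional_X_pow_mul h0 h1 hγ _ r).1 k rfl,
      show l + (r + 2 * k) = r + l + 2 * k by ring]
    field_simp
    ring
  · intro e he
    rw [qConvTerm_qHermitePoly h0 h1 hγ r l x hx,
      (gaussFunctional_X_pow_mul h0 h1 hγ e r).2 fun k hk => he ⟨k, hk.symm⟩]
    simp

lemma qConvTerm_comm {q γ : ℝ} (h0 : 0 < q) (h1 : q < 1) (hγ : γ ≠ 0) (p₁ p₂ : ℝ[X]) (x : ℝ)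
    (hx : x ≠ 0) :
    ∃ s, HasSum (qConvTerm q γ p₁ p₂ x) s ∧ HasSum (qConvTerm q γ p₂ p₁ x) s := by
  have hp₁ : p₁ ∈ Submodule.span ℝ (Set.range (qHermitePoly q)) :=
    span_qHermitePoly q ▸ Submodule.mem_top
  have hp₂ : p₂ ∈ Submodule.span ℝ (Set.range (qHermitePoly q)) :=
    span_qHermitePoly q ▸ Submodule.mem_top
  induction hp₁, hp₂ using Submodule.span_induction₂ with
  | mem_mem p₁ p₂ h₁ h₂ =>
    obtain ⟨r, rfl⟩ := h₁
    obtain ⟨l, rfl⟩ := h₂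
    refine ⟨_, hasSum_qConvTerm_qHermitePoly h0 h1 hγ r l x hx, ?_⟩
    have := hasSum_qConvTerm_qHermitePoly h0 h1 hγ l r x hx
    simpa only [mul_comm r l, add_comm r l] using this
  | zero_left p _ =>
    refine ⟨0, ?_, ?_⟩
    · have := qConvTerm_smul_left h0 h1 hγ 0 0 p x
      simp only [zero_smul, zero_mul] at this
      exact this ▸ hasSum_zero
    · have := qConvTerm_smul_right q γ 0 p 0 x
      simp only [zero_smul, zero_mul] at this
      exact this ▸ hasSum_zero
  | zero_right p _ =>
    refine ⟨0, ?_, ?_⟩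
    · have := qConvTerm_smul_right q γ 0 p 0 x
      simp only [zero_smul, zero_mul] at this
      exact this ▸ hasSum_zero
    · have := qConvTerm_smul_left h0 h1 hγ 0 0 p x
      simp only [zero_smul, zero_mul] at this
      exact this ▸ hasSum_zero
  | add_left p p' p₂ _ _ _ h h' =>
    obtain ⟨s, hs₁, hs₂⟩ := h
    obtain ⟨t, ht₁, ht₂⟩ := h'
    exact ⟨s + t, qConvTerm_add_left h0 h1 hγ p p' p₂ x ▸ hs₁.add ht₁,
      qConvTerm_add_right q γ p₂ p p' x ▸ hs₂.add ht₂⟩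
  | add_right p₁ p p' _ _ _ h h' =>
    obtain ⟨s, hs₁, hs₂⟩ := h
    obtain ⟨t, ht₁, ht₂⟩ := h'
    exact ⟨s + t, qConvTerm_add_right q γ p₁ p p' x ▸ hs₁.add ht₁,
      qConvTerm_add_left h0 h1 hγ p p' p₁ x ▸ hs₂.add ht₂⟩
  | smul_left a p p₂ _ _ h =>
    obtain ⟨s, hs₁, hs₂⟩ := h
    exact ⟨a * s, qConvTerm_smul_left h0 h1 hγ a p p₂ x ▸ hs₁.mul_left a,
      qConvTerm_smul_right q γ a p₂ p x ▸ hs₂.mul_left a⟩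
  | smul_right a p₁ p _ _ h =>
    obtain ⟨s, hs₁, hs₂⟩ := h
    exact ⟨a * s, qConvTerm_smul_right q γ a p₁ p x ▸ hs₁.mul_left a,
      qConvTerm_smul_left h0 h1 hγ a p p₁ x ▸ hs₂.mul_left a⟩

/-- Convolution of q-Hermite Gaussians and commutativity of polynomials times Gaussian. -/
theorem stmt14 (q γ : ℝ) (hq : q ∈ Set.Ioo (0 : ℝ) 1) (hγ : γ ∈ Set.Ioo (0 : ℝ) 1)
    (r l : ℕ) :
    (∀ x : ℝ, x ≠ 0 →
      qConv q γ (fun y => qHermiteII q r y * qGauss q y)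
          (fun y => qHermiteII q l y * qGauss q y) x =
        qInt q γ (qGauss q) * q ^ (l * r) *
          ∑' k : ℕ, q ^ (3 * k ^ 2) * q ^ (2 * (r + l) * k) / qPoch (q ^ 2) (q ^ 2) k *
            (qHermiteII q (l + r + 2 * k) x * qGauss q x)) ∧
    (∀ p₁ p₂ : Polynomial ℝ, ∀ x : ℝ, x ≠ 0 →
      qConv q γ (fun y => p₁.eval y * qGauss q y) (fun y => p₂.eval y * qGauss q y) x =
        qConv q γ (fun y => p₂.eval y * qGauss q y) (fun y => p₁.eval y * qGauss q y) x) := by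
  obtain ⟨h0, h1⟩ := hq
  have hγ' : γ ≠ 0 := hγ.1.ne'
  refine ⟨fun x hx => ?_, fun p₁ p₂ x hx => ?_⟩
  · simp only [← eval_qHermitePoly h0 h1]
    exact (hasSum_qConvTerm_qHermitePoly h0 h1 hγ' r l x hx).tsum_eq
  · obtain ⟨s, hs₁, hs₂⟩ := qConvTerm_comm h0 h1 hγ' p₁ p₂ x hx
    exact hs₁.tsum_eq.trans hs₂.tsum_eq.symm
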